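/- arXiv:2602.22081 — 2 statements merged into one kernel-verified Lean document; each statement's English description precedes it below -/
import Mathlib

section
/- Let M, L, w be positive integers with w ≥ 2. If every prime factor of L is at least 2w - 1, then every MC-CAC of length L and weight w in M channels has at most M(M-1)L/(w(w-1)) + M(L-1)/(2w-2) codewords. -/
/-- The set of time slots used by codeword `S` on channel `i`. -/
def chan {M L : ℕ} (S : Finset (Fin M × ZMod L)) (i : Fin M) : Finset (ZMod L) :=
  (S.filter fun p => p.1 = i).image Prod.snd

/-- The `(i,j)` set of differences of a codeword `S ⊆ {1,…,M} × Z_L`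
(with `0` removed when `i = j`). -/
def Darr {M L : ℕ} (S : Finset (Fin M × ZMod L)) (i j : Fin M) : Finset (ZMod L) :=
  if i = j then (((chan S i) ×ˢ (chan S j)).image fun p => p.1 - p.2).erase 0
  else ((chan S i) ×ˢ (chan S j)).image fun p => p.1 - p.2

/-- A multichannel conflict-avoiding code of length `L` and weight `w` in `M` channels. -/
def IsMCCAC (M L w : ℕ) (C : Finset (Finset (Fin M × ZMod L))) : Prop :=
  (∀ S ∈ C, S.card = w) ∧
  ∀ S ∈ C, ∀ S' ∈ C, S ≠ S' → ∀ i j : Fin M, Disjoint (Darr S i j) (Darr S' i j)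

open scoped Pointwise in
lemma aux_cd (L w : ℕ) (hL : 0 < L)
    (hprime : ∀ p : ℕ, p.Prime → p ∣ L → 2 * w - 1 ≤ p)
    (A B : Finset (ZMod L)) (hA : A.Nonempty) (hB : B.Nonempty)
    (hAB : A.card + B.card ≤ 2 * w) :
    A.card + B.card - 1 ≤ ((A ×ˢ B).image fun p => p.1 - p.2).card := by
  haveI : NeZero L := ⟨hL.ne'⟩
  have e : ((A ×ˢ B).image fun p => p.1 - p.2) = A + (-B) := by
    rw [← sub_eq_add_neg]; rfl
  rw [e]
  by_cases h1 : L = 1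
  · subst h1
    have h2 : A.card ≤ 1 := by simpa [ZMod.card] using Finset.card_le_univ A
    have h3 : B.card ≤ 1 := by simpa [ZMod.card] using Finset.card_le_univ B
    have := (hA.add hB.neg).card_pos
    omega
  · have h := cauchy_davenport_minOrder_add hA hB.neg
    rw [ZMod.minOrder hL.ne' h1, Finset.card_neg] at h
    have h2 := hprime _ (Nat.minFac_prime h1) (Nat.minFac_dvd L)
    have h3 : min L.minFac (A.card + B.card - 1) ≤ (A + -B).card := by
      rcases min_le_iff.1 h with h | h
      · exact (min_le_left _ _).trans (by exact_mod_cast h)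
      · exact (min_le_right _ _).trans (Nat.cast_le.1 h)
    rw [min_eq_right (by omega)] at h3
    exact h3

lemma aux_chan_sum {M L : ℕ} (S : Finset (Fin M × ZMod L)) :
    ∑ i, (chan S i).card = S.card := by
  rw [Finset.card_eq_sum_card_fiberwise (f := Prod.fst) (t := Finset.univ) (by simp)]
  refine Finset.sum_congr rfl fun i _ => ?_
  unfold chan
  apply Finset.card_image_of_injOn
  intro a ha b hb h
  simp at ha hb
  exact Prod.ext (ha.2.trans hb.2.symm) h

lemma aux_upper (M L w : ℕ) (hL : 0 < L)
    (C : Finset (Finset (Fin M × ZMod L))) (hC : IsMCCAC M L w C) (i j : Fin M) :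
    ∑ S ∈ C, ((Darr S i j).card : ℝ) ≤ (L : ℝ) - if i = j then 1 else 0 := by
  haveI : NeZero L := ⟨hL.ne'⟩
  have h : ∑ S ∈ C, (Darr S i j).card = (C.biUnion fun S => Darr S i j).card :=
    (Finset.card_biUnion fun S hS S' hS' hne => hC.2 S hS S' hS' hne i j).symm
  rw [← Nat.cast_sum, h]
  split_ifs with hij
  · have : (C.biUnion fun S => Darr S i j).card ≤ (Finset.univ.erase (0 : ZMod L)).card := by
      apply Finset.card_le_card
      intro x hx
      simp [Darr, hij] at hx ⊢
      obtain ⟨_, _, h, _⟩ := hx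
      exact h
    rw [Finset.card_erase_of_mem (Finset.mem_univ _), Finset.card_univ, ZMod.card] at this
    have h2 : (C.biUnion fun S => Darr S i j).card + 1 ≤ L := by omega
    have h3 : ((C.biUnion fun S => Darr S i j).card : ℝ) + 1 ≤ L := by exact_mod_cast h2
    linarith
  · have := Finset.card_le_univ (C.biUnion fun S => Darr S i j)
    rw [ZMod.card] at this
    simpa using this

lemma aux_lower (M L w : ℕ) (hL : 0 < L)
    (hprime : ∀ p : ℕ, p.Prime → p ∣ L → 2 * w - 1 ≤ p)
    (S : Finset (Fin M × ZMod L)) (hS : S.card = w) (i j : Fin M) :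
    (if (chan S i).Nonempty then (1:ℝ) else 0) * (if (chan S j).Nonempty then (1:ℝ) else 0) *
      ((chan S i).card + (chan S j).card - 1 - if i = j then 1 else 0)
      ≤ ((Darr S i j).card : ℝ) := by
  by_cases hi : (chan S i).Nonempty
  swap
  · simp [hi]
  by_cases hj : (chan S j).Nonempty
  swap
  · simp [hj]
  have hle : ∀ i, (chan S i).card ≤ w := fun i => by
    rw [← hS, ← aux_chan_sum S]
    exact Finset.single_le_sum (f := fun i => (chan S i).card) (by simp) (Finset.mem_univ i)
  have h := aux_cd L w hL hprime _ _ hi hj (by have := hle i; have := hle j; omega)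
  simp only [hi, hj, if_true, one_mul]
  have hp := hi.card_pos
  split_ifs with hij
  · subst hij
    have h0 : (0 : ZMod L) ∈ ((chan S i) ×ˢ (chan S i)).image fun p => p.1 - p.2 := by
      obtain ⟨x, hx⟩ := hi
      exact Finset.mem_image.2 ⟨(x, x), by simp [hx], by simp⟩
    have h2 : (chan S i).card + (chan S i).card ≤ (Darr S i i).card + 2 := by
      rw [Darr, if_pos rfl, Finset.card_erase_of_mem h0]
      omega
    have h3 : ((chan S i).card : ℝ) + (chan S i).card ≤ (Darr S i i).card + 2 := by
      exact_mod_cast h2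
    linarith
  · have h2 : (chan S i).card + (chan S j).card ≤ (Darr S i j).card + 1 := by
      rw [Darr, if_neg hij]
      omega
    have h3 : ((chan S i).card : ℝ) + (chan S j).card ≤ (Darr S i j).card + 1 := by
      exact_mod_cast h2
    linarith

lemma aux_word (M L w : ℕ) (hL : 0 < L) (hw : 2 ≤ w)
    (hprime : ∀ p : ℕ, p.Prime → p ∣ L → 2 * w - 1 ≤ p)
    (S : Finset (Fin M × ZMod L)) (hS : S.card = w) :
    2 * (w : ℝ) * (w - 1) ≤
      ∑ i : Fin M, ∑ j : Fin M, (if i = j then (w : ℝ) else 2) * ((Darr S i j).card : ℝ) := by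
  set u : Fin M → ℝ := fun i => if (chan S i).Nonempty then (1:ℝ) else 0 with hu
  set s : Fin M → ℝ := fun i => ((chan S i).card : ℝ) with hs
  have hsum : ∑ i, s i = w := by
    rw [← hS, ← aux_chan_sum S]; push_cast; rfl
  have huu : ∀ i, u i * u i = u i := fun i => by simp [hu]
  have hus : ∀ i, u i * s i = s i := fun i => by
    by_cases h : (chan S i).Nonempty
    · simp [hu, h]
    · simp [hu, hs, h, Finset.not_nonempty_iff_eq_empty.1 h]
  have hle : ∀ i, u i ≤ s i := fun i => by
    by_cases h : (chan S i).Nonempty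
    · have := h.card_pos
      simp only [hu, hs, h, if_true]
      exact_mod_cast this
    · simp [hu, hs, h]
  have hw' : (2 : ℝ) ≤ w := by exact_mod_cast hw
  have hk2 : ∑ i, u i ≤ w := hsum ▸ Finset.sum_le_sum fun i _ => hle i
  have hk1 : 1 ≤ ∑ i, u i := by
    have hne : ∃ i, (chan S i).Nonempty := by
      by_contra! hcon
      have : ∑ i, (chan S i).card = 0 := Finset.sum_eq_zero fun i _ => by simp [hcon i]
      rw [aux_chan_sum] at this
      omega
    obtain ⟨i, hi⟩ := hne
    have : u i = 1 := by simp [hu, hi]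
    rw [← this]
    refine Finset.single_le_sum (fun j _ => ?_) (Finset.mem_univ i)
    simp only [hu]; split_ifs <;> norm_num
  set k := ∑ i, u i with hk
  calc 2 * (w : ℝ) * (w - 1) ≤ 2 * (2 * k * w - k ^ 2) + (w * (2 * w - 2 * k) - 2 * (2 * w - k)) := by
        nlinarith [mul_nonneg (sub_nonneg.2 hk1) (sub_nonneg.2 hk2)]
    _ = ∑ i : Fin M, ∑ j : Fin M, (2 * (s i * u j + u i * s j - u i * u j) +
          if i = j then w * (2 * s i - 2 * u i) - 2 * (2 * s i - u i) else 0) := by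
        simp only [Finset.sum_add_distrib, Finset.sum_sub_distrib, ← Finset.mul_sum,
          Finset.sum_ite_eq, Finset.mem_univ, if_true, ← Finset.sum_mul, hsum, ← hk]
        ring
    _ ≤ _ := by
        refine Finset.sum_le_sum fun i _ => Finset.sum_le_sum fun j _ => ?_
        have h := aux_lower M L w hL hprime S hS i j
        change u i * u j * (s i + s j - 1 - _) ≤ _ at h
        split_ifs at h ⊢ with hij
        · subst hij
          rw [huu] at h
          have h1 := hus i
          have h2 := huu i
          have h3 : 2 * s i - 2 * u i ≤ ((Darr S i i).card : ℝ) := by linarith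
          have h4 := mul_le_mul_of_nonneg_left h3 (by linarith : (0:ℝ) ≤ w)
          have h5 : s i * u i = s i := by rw [mul_comm]; exact h1
          rw [h1, h2, h5]
          linarith
        · have h5 : u i * u j * (s i + s j - 1 - 0) = s i * u j + u i * s j - u i * u j := by
            linear_combination u j * hus i + u i * hus j
          rw [h5] at h
          linarith

theorem stmt_1 (M L w : ℕ) (hM : 0 < M) (hL : 0 < L) (hw : 2 ≤ w)
    (hprime : ∀ p : ℕ, p.Prime → p ∣ L → 2 * w - 1 ≤ p)
    (C : Finset (Finset (Fin M × ZMod L))) (hC : IsMCCAC M L w C) :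
    (C.card : ℝ) ≤
      (M : ℝ) * ((M : ℝ) - 1) * (L : ℝ) / ((w : ℝ) * ((w : ℝ) - 1))
      + (M : ℝ) * ((L : ℝ) - 1) / (2 * (w : ℝ) - 2) := by
  have hw' : (2 : ℝ) ≤ w := by exact_mod_cast hw
  have key : (C.card : ℝ) * (2 * (w : ℝ) * (w - 1)) ≤
      2 * (M * (M - 1) * L) + w * (M * (L - 1)) := by
    calc (C.card : ℝ) * (2 * (w : ℝ) * (w - 1))
        = ∑ S ∈ C, (2 * (w : ℝ) * (w - 1)) := by simp
      _ ≤ ∑ S ∈ C, ∑ i : Fin M, ∑ j : Fin M,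
            (if i = j then (w : ℝ) else 2) * ((Darr S i j).card : ℝ) :=
          Finset.sum_le_sum fun S hS => aux_word M L w hL hw hprime S (hC.1 S hS)
      _ = ∑ i : Fin M, ∑ j : Fin M,
            (if i = j then (w : ℝ) else 2) * ∑ S ∈ C, ((Darr S i j).card : ℝ) := by
          rw [Finset.sum_comm]
          refine Finset.sum_congr rfl fun i _ => ?_
          rw [Finset.sum_comm]
          simp only [Finset.mul_sum]
      _ ≤ ∑ i : Fin M, ∑ j : Fin M, (2 * (L : ℝ) +
            if i = j then w * ((L : ℝ) - 1) - 2 * L else 0) := by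
          refine Finset.sum_le_sum fun i _ => Finset.sum_le_sum fun j _ => ?_
          have h := aux_upper M L w hL C hC i j
          split_ifs at h ⊢ with hij
          · have h4 := mul_le_mul_of_nonneg_left h (by linarith : (0:ℝ) ≤ w)
            linarith
          · linarith
      _ = _ := by
          simp [Finset.sum_add_distrib]
          ring
  have h1 : (0 : ℝ) < w - 1 := by linarith
  have h0 : (0 : ℝ) < w := by linarith
  have e : (M : ℝ) * ((M : ℝ) - 1) * (L : ℝ) / ((w : ℝ) * ((w : ℝ) - 1))
      + (M : ℝ) * ((L : ℝ) - 1) / (2 * (w : ℝ) - 2) =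
      (2 * (M * (M - 1) * L) + w * (M * (L - 1))) / (2 * (w : ℝ) * (w - 1)) := by
    rw [show 2 * (w : ℝ) - 2 = 2 * (w - 1) by ring]
    field_simp
  rw [e, le_div_iff₀ (by positivity)]
  exact key
end

section
/- Let w ≥ 2 be an integer and let p_1 < p_2 < ... < p_n be primes such that 2w - 2 divides p_i - 1 for each i. Suppose that for each i = 1, ..., n there exists an equi-difference CAC of length p_i and weight w with (p_i - 1)/(2w - 2) codewords, and that the Legendre symbol conditions hold: (-1/p_i) = -1, and (j/p_i)·((j-w+1)/p_i) = -1 for every j = 1, 2, ..., w-2. Then for any positive integers r_1, ..., r_n, the maximum number of codewords of an MC-CAC of length (w-1)·p_1^{r_1}···p_n^{r_n} and weight w in 2 channels equals p_1^{r_1}···p_n^{r_n} + (p_1^{r_1}···p_n^{r_n} - 1)/(w - 1). -/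
/-- The set of nonzero differences of a subset `S ⊆ Z_L`. -/
def dstar {L : ℕ} (S : Finset (ZMod L)) : Finset (ZMod L) :=
  ((S ×ˢ S).image fun p => p.1 - p.2).erase 0

/-- A conflict-avoiding code of length `L` and weight `w`. -/
def IsCAC (L w : ℕ) (C : Finset (Finset (ZMod L))) : Prop :=
  (∀ S ∈ C, S.card = w) ∧
  ∀ S ∈ C, ∀ S' ∈ C, S ≠ S' → Disjoint (dstar S) (dstar S')

/-- A codeword is equi-difference if it is of the form `{0, g, 2g, …, (w-1)g}`. -/
def IsEquiDiff {L : ℕ} (w : ℕ) (S : Finset (ZMod L)) : Prop :=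
  ∃ g : ZMod L, S = (Finset.range w).image fun j : ℕ => (j : ZMod L) * g

open scoped Pointwise in
lemma dyson_aux {G : Type*} [AddCommGroup G] [Fintype G] [DecidableEq G] :
    ∀ (n : ℕ) (A B : Finset G), B.card = n → (0 : G) ∈ A → (0 : G) ∈ B →
    ∃ (H : AddSubgroup G) (C : Finset G), C ⊆ A + B ∧ (0 : G) ∈ C ∧
      (∀ h ∈ H, ∀ c ∈ C, c + h ∈ C) ∧ A.card + B.card ≤ C.card + Nat.card H := by
  intro n
  induction n using Nat.strong_induction_on with
  | _ n ih =>
  intro A B hBn hA hB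
  by_cases hst : ∀ e ∈ A, ∀ b ∈ B, e + b ∈ A
  · let H : AddSubgroup G := AddAction.stabilizer G A
    have hBH : ∀ b ∈ B, b ∈ H := by
      intro b hb
      change b +ᵥ A = A
      apply Finset.eq_of_subset_of_card_le
      · intro x hx
        obtain ⟨a, ha, rfl⟩ := Finset.mem_vadd_finset.1 hx
        have := hst a ha b hb
        rw [vadd_eq_add, add_comm]; exact this
      · simp
    refine ⟨H, A, ?_, hA, ?_, ?_⟩
    · intro a ha
      exact Finset.mem_add.2 ⟨a, ha, 0, hB, by simp⟩
    · intro h hh c hc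
      have hh' : h +ᵥ A = A := hh
      rw [← hh', add_comm]
      exact Finset.vadd_mem_vadd_finset hc
    · have : B.card ≤ Nat.card H := by
        have h1 : (B : Set G).ncard ≤ (H : Set G).ncard :=
          Set.ncard_le_ncard (fun b hb => hBH b hb) (Set.toFinite _)
        rw [Set.ncard_coe_finset] at h1
        exact h1
      omega
  · push Not at hst
    obtain ⟨e, he, b, hb, heb⟩ := hst
    have hsub := Finset.addDysonETransform.subset e (A, B)
    have hcard := Finset.addDysonETransform.card e (A, B)
    simp only [Finset.addDysonETransform] at hsub hcard
    have hlt : (B ∩ (-e +ᵥ A)).card < n := by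
      rw [← hBn]
      apply Finset.card_lt_card
      refine ⟨Finset.inter_subset_left, fun h => ?_⟩
      have := Finset.mem_inter.1 (h hb)
      obtain ⟨a, ha, hab⟩ := Finset.mem_vadd_finset.1 this.2
      apply heb
      rw [← hab]
      simpa using ha
    obtain ⟨H, C, h1, h2, h3, h4⟩ := ih _ hlt (A ∪ (e +ᵥ B)) (B ∩ (-e +ᵥ A)) rfl
      (Finset.mem_union_left _ hA)
      (Finset.mem_inter.2 ⟨hB, Finset.mem_vadd_finset.2 ⟨e, he, by simp⟩⟩)
    exact ⟨H, C, h1.trans hsub, h2, h3, by omega⟩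

lemma card_dvd_of_closed {G : Type*} [AddCommGroup G] [Fintype G] [DecidableEq G]
    (H : AddSubgroup G) (C : Finset G) (h : ∀ h ∈ H, ∀ c ∈ C, c + h ∈ C) :
    Nat.card H ∣ C.card := by
  classical
  rw [Finset.card_eq_sum_card_image (fun c : G => (QuotientAddGroup.mk c : G ⧸ H)) C]
  apply Finset.dvd_sum
  intro q hq
  obtain ⟨c, hc, rfl⟩ := Finset.mem_image.1 hq
  have : C.filter (fun x => (QuotientAddGroup.mk x : G ⧸ H) = QuotientAddGroup.mk c) =
      (Finset.univ.filter (fun x => x ∈ H)).image (fun x => c + x) := by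
    ext x
    simp only [Finset.mem_filter, Finset.mem_image, Finset.mem_univ, true_and]
    constructor
    · rintro ⟨_, h2⟩
      refine ⟨-c + x, ?_, by abel⟩
      exact QuotientAddGroup.eq.1 h2.symm
    · rintro ⟨y, hy, rfl⟩
      refine ⟨h y hy c hc, ?_⟩
      rw [eq_comm, QuotientAddGroup.eq]
      simpa using hy
  rw [this, Finset.card_image_of_injective _ (add_right_injective c)]
  rw [Nat.card_eq_fintype_card, Fintype.card_subtype]

lemma sub_card_alt {k N : ℕ} (hk : 0 < k) (hN0 : 0 < N)
    (hN : ∀ q : ℕ, q.Prime → q ∣ N → 2 * k + 1 ≤ q) (H : AddSubgroup (ZMod (k * N))) :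
    Nat.card H ∣ k ∨ 2 * k + 1 ≤ Nat.card H := by
  have : NeZero (k * N) := ⟨by positivity⟩
  have hd : Nat.card H ∣ k * N := by
    have := AddSubgroup.card_addSubgroup_dvd_card H
    simpa using this
  by_cases hc : Nat.Coprime (Nat.card H) N
  · left; exact hc.dvd_of_dvd_mul_right hd
  · right
    obtain ⟨q, hq, h1, h2⟩ := Nat.Prime.not_coprime_iff_dvd.1 hc
    exact (hN q hq h2).trans (Nat.le_of_dvd Nat.card_pos h1)

open scoped Pointwise in
lemma mixed_bound {k N : ℕ} (hk : 0 < k) (hN0 : 0 < N)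
    (hN : ∀ q : ℕ, q.Prime → q ∣ N → 2 * k + 1 ≤ q) (A B : Finset (ZMod (k * N)))
    (hA : A.Nonempty) (hB : B.Nonempty) (hc : A.card + B.card = k + 1) :
    k ≤ ((A ×ˢ B).image fun p => p.1 - p.2).card := by
  have : NeZero (k * N) := ⟨by positivity⟩
  obtain ⟨a, ha⟩ := hA
  obtain ⟨b, hb⟩ := hB
  obtain ⟨H, C, h1, h2, h3, h4⟩ := dyson_aux _ (A.image fun x => x - a) (B.image fun x => b - x) rfl
    (Finset.mem_image.2 ⟨a, ha, by simp⟩) (Finset.mem_image.2 ⟨b, hb, by simp⟩)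
  rw [Finset.card_image_of_injective _ (sub_left_injective),
    Finset.card_image_of_injective _ (sub_right_injective)] at h4
  have h5 : C.card ≤ ((A ×ˢ B).image fun p => p.1 - p.2).card := by
    apply Finset.card_le_card_of_injOn (fun x => x + (a - b)) _ ((add_left_injective _).injOn)
    intro c hc
    obtain ⟨x, hx, y, hy, rfl⟩ := Finset.mem_add.1 (h1 hc)
    obtain ⟨x, hx', rfl⟩ := Finset.mem_image.1 hx
    obtain ⟨y, hy', rfl⟩ := Finset.mem_image.1 hy
    simp only [Finset.coe_image, Set.mem_image, Finset.mem_coe, Finset.mem_product]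
    exact ⟨(x, y), ⟨hx', hy'⟩, by simp only; abel⟩
  have hdv := card_dvd_of_closed H C h3
  refine le_trans ?_ h5
  rcases sub_card_alt hk hN0 hN H with h | h
  · obtain ⟨x, hx⟩ := hdv
    obtain ⟨y, hy⟩ := h
    have hpos : 0 < Nat.card H := Nat.card_pos
    rw [hx] at h4 ⊢
    generalize Nat.card H = m at *
    rw [hy]
    apply Nat.mul_le_mul_left
    by_contra hlt
    push Not at hlt
    have : m * (x + 1) ≤ m * y := Nat.mul_le_mul_left _ hlt
    rw [mul_add] at this
    omega
  · have : Nat.card H ≤ C.card := Nat.le_of_dvd (Finset.card_pos.2 ⟨0, h2⟩) hdv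
    omega

/-- elements killed by `k` -/
def Kset (k L : ℕ) [NeZero L] : Finset (ZMod L) := Finset.univ.filter fun x => k • x = 0

lemma Kset_card {k L : ℕ} [NeZero L] (hk : 0 < k) : (Kset k L).card ≤ k :=
  IsAddCyclic.card_nsmul_eq_zero_le hk

open scoped Pointwise in
lemma pure_bound {k N : ℕ} [NeZero (k * N)] (hk : 0 < k) (hN0 : 0 < N)
    (hN : ∀ q : ℕ, q.Prime → q ∣ N → 2 * k + 1 ≤ q) (A : Finset (ZMod (k * N)))
    (hA : A.Nonempty) (hc : A.card ≤ k + 1) :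
    2 * A.card ≤ (((A ×ˢ A).image fun p => p.1 - p.2).erase 0).card +
      ((((A ×ˢ A).image fun p => p.1 - p.2).erase 0) ∩ Kset k (k * N)).card + 2 := by
  obtain ⟨a, ha⟩ := hA
  obtain ⟨H, C, h1, h2, h3, h4⟩ := dyson_aux _ (A.image fun x => x - a) (A.image fun x => a - x) rfl
    (Finset.mem_image.2 ⟨a, ha, by simp⟩) (Finset.mem_image.2 ⟨a, ha, by simp⟩)
  rw [Finset.card_image_of_injective _ (sub_left_injective),
    Finset.card_image_of_injective _ (sub_right_injective)] at h4
  set D := ((A ×ˢ A).image fun p => p.1 - p.2) with hD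
  have h5 : C ⊆ D := by
    intro c hc
    obtain ⟨x, hx, y, hy, rfl⟩ := Finset.mem_add.1 (h1 hc)
    obtain ⟨x, hx', rfl⟩ := Finset.mem_image.1 hx
    obtain ⟨y, hy', rfl⟩ := Finset.mem_image.1 hy
    simp only [hD, Finset.mem_image, Finset.mem_product]
    exact ⟨(x, y), ⟨hx', hy'⟩, by simp only; abel⟩
  have h6 : (C.erase 0).card ≤ (D.erase 0).card := Finset.card_le_card (Finset.erase_subset_erase _ h5)
  rw [Finset.card_erase_of_mem h2] at h6
  have hdv := card_dvd_of_closed H C h3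
  have hCpos : 0 < C.card := Finset.card_pos.2 ⟨0, h2⟩
  rcases sub_card_alt hk hN0 hN H with h | h
  · classical
    let HF : Finset (ZMod (k * N)) := Finset.univ.filter (fun x => x ∈ H)
    have hHF : HF.card = Nat.card H := by
      rw [Nat.card_eq_fintype_card, Fintype.card_subtype]
    have h7 : HF.erase 0 ⊆ D.erase 0 ∩ Kset k (k * N) := by
      intro x hx
      obtain ⟨hx0, hx⟩ := Finset.mem_erase.1 hx
      have hxH : x ∈ H := (Finset.mem_filter.1 hx).2
      refine Finset.mem_inter.2 ⟨Finset.mem_erase.2 ⟨hx0, h5 ?_⟩, ?_⟩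
      · have := h3 x hxH 0 h2
        simpa using this
      · refine Finset.mem_filter.2 ⟨Finset.mem_univ _, ?_⟩
        obtain ⟨y, hy⟩ := h
        have : Nat.card H • x = 0 := by
          have := card_nsmul_eq_zero' (x := (⟨x, hxH⟩ : H))
          exact congrArg Subtype.val this
        have e : k • x = (Nat.card H * y) • x := congrArg (fun t : ℕ => t • x) hy
        rw [e, mul_nsmul, this, nsmul_zero]
    have h8 := Finset.card_le_card h7
    rw [Finset.card_erase_of_mem (Finset.mem_filter.2 ⟨Finset.mem_univ _, H.zero_mem⟩), hHF] at h8
    omega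
  · have : Nat.card H ≤ C.card := Nat.le_of_dvd hCpos hdv
    omega

lemma sum_disj {α β : Type*} [DecidableEq α] [DecidableEq β] (C : Finset α) (f : α → Finset β) (U : Finset β)
    (h : ∀ S ∈ C, ∀ S' ∈ C, S ≠ S' → Disjoint (f S) (f S')) (hU : ∀ S ∈ C, f S ⊆ U) :
    ∑ S ∈ C, (f S).card ≤ U.card := by
  rw [← Finset.card_biUnion (fun S hS S' hS' hne => h S hS S' hS' hne)]
  exact Finset.card_le_card (Finset.biUnion_subset.2 hU)

lemma chan_card {L : ℕ} (S : Finset (Fin 2 × ZMod L)) :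
    (chan S 0).card + (chan S 1).card = S.card := by
  unfold chan
  rw [Finset.card_image_of_injOn, Finset.card_image_of_injOn]
  · rw [← Finset.card_filter_add_card_filter_not (s := S) (fun p => p.1 = 0)]
    congr 2
    apply Finset.filter_congr
    intro x _
    have := x.1
    generalize x.1 = y
    fin_cases y <;> simp
  · rintro ⟨a, b⟩ h ⟨c, d⟩ h' h2
    simp_all
  · rintro ⟨a, b⟩ h ⟨c, d⟩ h' h2
    simp_all

lemma upper {k N : ℕ} (hk : 0 < k) (hN0 : 0 < N)
    (hN : ∀ q : ℕ, q.Prime → q ∣ N → 2 * k + 1 ≤ q) (hd : k ∣ N - 1)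
    (C : Finset (Finset (Fin 2 × ZMod (k * N)))) (hC : IsMCCAC 2 (k * N) (k + 1) C) :
    C.card ≤ N + (N - 1) / k := by
  have : NeZero (k * N) := ⟨by positivity⟩
  obtain ⟨hw, hdis⟩ := hC
  let U : Finset (ZMod (k * N)) := Finset.univ
  have hUc : U.card = k * N := by simp [U, ZMod.card]
  let K := Kset k (k * N)
  have hKc : (K.erase 0).card ≤ k - 1 := by
    have h0 : (0 : ZMod (k * N)) ∈ Kset k (k * N) :=
      Finset.mem_filter.2 ⟨Finset.mem_univ _, nsmul_zero _⟩
    rw [Finset.card_erase_of_mem h0]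
    have := Kset_card (k := k) (L := k * N) hk
    change (Kset k (k * N)).card - 1 ≤ _
    omega
  have hU0 : (U.erase 0).card = k * N - 1 := by
    rw [Finset.card_erase_of_mem (Finset.mem_univ _), hUc]
  have e1 : ∀ i : Fin 2, ∑ S ∈ C, (Darr S i i).card ≤ k * N - 1 := by
    intro i
    rw [← hU0]
    apply sum_disj
    · intro S hS S' hS' hne; exact hdis S hS S' hS' hne i i
    · intro S hS; simp only [Darr, if_true]; exact Finset.erase_subset_erase _ (Finset.subset_univ _)
  have e2 : ∀ i : Fin 2, ∑ S ∈ C, (Darr S i i ∩ K).card ≤ k - 1 := by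
    intro i
    refine le_trans ?_ hKc
    apply sum_disj
    · intro S hS S' hS' hne
      exact (hdis S hS S' hS' hne i i).mono Finset.inter_subset_left Finset.inter_subset_left
    · intro S hS x hx
      simp only [Darr, if_true, Finset.mem_inter, Finset.mem_erase] at hx
      exact Finset.mem_erase.2 ⟨hx.1.1, hx.2⟩
  have e3 : ∑ S ∈ C, (Darr S 0 1).card ≤ k * N := by
    refine le_trans ?_ hUc.le
    apply sum_disj
    · intro S hS S' hS' hne; exact hdis S hS S' hS' hne 0 1
    · intro S hS; exact Finset.subset_univ _
  let m : Finset (Fin 2 × ZMod (k * N)) → ℕ :=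
    fun S => if (chan S 0).Nonempty ∧ (chan S 1).Nonempty then 1 else 0
  have e4 : ∑ S ∈ C, m S ≤ N := by
    have : k * ∑ S ∈ C, m S ≤ k * N := by
      refine le_trans ?_ e3
      rw [Finset.mul_sum]
      apply Finset.sum_le_sum
      intro S hS
      by_cases h : (chan S 0).Nonempty ∧ (chan S 1).Nonempty
      · simp only [m, if_pos h, mul_one]
        have := mixed_bound hk hN0 hN _ _ h.1 h.2 (by rw [chan_card]; exact hw S hS)
        simpa [Darr] using this
      · simp [m, if_neg h]
    exact Nat.le_of_mul_le_mul_left this hk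
  have e5 : ∀ S ∈ C, 2 * k ≤ (Darr S 0 0).card + (Darr S 1 1).card + (Darr S 0 0 ∩ K).card +
      (Darr S 1 1 ∩ K).card + 2 * m S := by
    intro S hS
    have hcc := chan_card S
    rw [hw S hS] at hcc
    have hb : ∀ i : Fin 2, (chan S i).Nonempty → (chan S i).card ≤ k + 1 →
        2 * (chan S i).card ≤ (Darr S i i).card + (Darr S i i ∩ K).card + 2 := by
      intro i h1 h2
      have := pure_bound hk hN0 hN _ h1 h2
      simpa only [Darr, if_true] using this
    rcases Finset.eq_empty_or_nonempty (chan S 0) with h0 | h0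
    · rw [h0, Finset.card_empty] at hcc
      have := hb 1 (Finset.card_pos.1 (by omega)) (by omega)
      omega
    · rcases Finset.eq_empty_or_nonempty (chan S 1) with h1 | h1
      · rw [h1, Finset.card_empty] at hcc
        have := hb 0 (Finset.card_pos.1 (by omega)) (by omega)
        omega
      · have g0 := hb 0 h0 (by omega)
        have g1 := hb 1 h1 (by omega)
        have : m S = 1 := by simp [m, h0, h1]
        omega
  have e6 := Finset.sum_le_sum e5
  simp only [Finset.sum_add_distrib, ← Finset.mul_sum, Finset.sum_const, smul_eq_mul] at e6
  have := e1 0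
  have := e1 1
  have := e2 0
  have := e2 1
  obtain ⟨q, hq⟩ := hd
  rw [hq, Nat.mul_div_cancel_left _ hk]
  have hkN : 1 ≤ k * N := Nat.mul_pos hk hN0
  have : k * C.card < k * (N + q + 1) := by
    rw [mul_add, mul_add, ← hq]
    have : C.card * k = k * C.card := mul_comm _ _
    omega
  have := Nat.lt_of_mul_lt_mul_left this
  omega

def ldg {N : ℕ} (x : ZMod N) : ℕ := Nat.gcd x.val N
def ldq {N : ℕ} (x : ZMod N) : ℕ := (N / ldg x).minFac
def ldu {N : ℕ} (x : ZMod N) : ℕ := x.val / ldg x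

lemma ldg_pos {N : ℕ} [NeZero N] (x : ZMod N) : 0 < ldg x :=
  Nat.gcd_pos_of_pos_right _ (NeZero.pos N)

lemma ldq_prime {N : ℕ} [NeZero N] {x : ZMod N} (hx : x ≠ 0) : (ldq x).Prime := by
  apply Nat.minFac_prime
  intro h
  have hd : ldg x ∣ N := Nat.gcd_dvd_right _ _
  have h1 : ldg x = N := by
    have := Nat.div_mul_cancel hd
    rw [h] at this; omega
  have h2 : N ∣ x.val := by
    have : ldg x ∣ x.val := Nat.gcd_dvd_left _ _
    rwa [h1] at this
  have h3 := Nat.eq_zero_of_dvd_of_lt h2 (ZMod.val_lt x)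
  exact hx ((ZMod.val_eq_zero x).1 h3)

lemma ldq_dvd' {N : ℕ} (x : ZMod N) : ldq x ∣ N / ldg x := Nat.minFac_dvd _

lemma ldq_dvd {N : ℕ} (x : ZMod N) : ldq x ∣ N :=
  (ldq_dvd' x).trans (Nat.div_dvd_of_dvd (Nat.gcd_dvd_right _ _))

lemma ldu_ne {N : ℕ} [NeZero N] {x : ZMod N} (hx : x ≠ 0) : ((ldu x : ℕ) : ZMod (ldq x)) ≠ 0 := by
  intro h
  have h1 : ldq x ∣ ldu x := (ZMod.natCast_eq_zero_iff _ _).1 h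
  have h2 : Nat.Coprime (ldu x) (N / ldg x) := Nat.coprime_div_gcd_div_gcd (ldg_pos x)
  exact (ldq_prime hx).one_lt.ne' (Nat.dvd_one.1 (h2 ▸ Nat.dvd_gcd h1 (ldq_dvd' x)))

lemma ld_mul {N : ℕ} [NeZero N] (x : ZMod N) (c : ℤ) (hc : IsCoprime c (N : ℤ)) :
    ldq ((c : ZMod N) * x) = ldq x ∧
      ((ldu ((c : ZMod N) * x) : ℕ) : ZMod (ldq x)) = (c : ZMod (ldq x)) * (ldu x : ℕ) := by
  set y := (c : ZMod N) * x with hy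
  have h1 : (N : ℤ) ∣ (c * x.val - y.val : ℤ) := by
    rw [← ZMod.intCast_zmod_eq_zero_iff_dvd] <;> try infer_instance
    push_cast
    simp [hy]
  obtain ⟨z, hz⟩ := h1
  have hg : ldg y = ldg x := by
    unfold ldg
    apply Nat.dvd_antisymm
    · apply Nat.dvd_gcd _ (Nat.gcd_dvd_right _ _)
      have a1 : ((Nat.gcd y.val N : ℕ) : ℤ) ∣ c * x.val := by
        have : c * x.val = y.val + N * z := by linarith
        rw [this]
        exact dvd_add (by exact_mod_cast Nat.gcd_dvd_left _ _)
          (Dvd.dvd.mul_right (by exact_mod_cast Nat.gcd_dvd_right _ _) _)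
      have a2 : IsCoprime ((Nat.gcd y.val N : ℕ) : ℤ) c :=
        (hc.symm).of_isCoprime_of_dvd_left (by exact_mod_cast Nat.gcd_dvd_right _ _)
      exact_mod_cast a2.dvd_of_dvd_mul_left a1
    · apply Nat.dvd_gcd _ (Nat.gcd_dvd_right _ _)
      have : ((Nat.gcd x.val N : ℕ) : ℤ) ∣ y.val := by
        have : (y.val : ℤ) = c * x.val - N * z := by linarith
        rw [this]
        exact dvd_sub (Dvd.dvd.mul_left (by exact_mod_cast Nat.gcd_dvd_left _ _) _)
          (Dvd.dvd.mul_right (by exact_mod_cast Nat.gcd_dvd_right _ _) _)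
      exact_mod_cast this
  have hq : ldq y = ldq x := by unfold ldq; rw [hg]
  refine ⟨hq, ?_⟩
  have hx1 : ldg x * ldu x = x.val := Nat.mul_div_cancel' (Nat.gcd_dvd_left _ _)
  have hy1 : ldg x * ldu y = y.val := by
    rw [← hg]; exact Nat.mul_div_cancel' (Nat.gcd_dvd_left _ _)
  have hN1 : ldg x * (N / ldg x) = N := Nat.mul_div_cancel' (Nat.gcd_dvd_right _ _)
  have hpos := ldg_pos x
  have key : (c * ldu x - ldu y : ℤ) = (N / ldg x : ℕ) * z := by
    have : (ldg x : ℤ) ≠ 0 := by exact_mod_cast hpos.ne'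
    apply mul_left_cancel₀ this
    have a1 : (ldg x : ℤ) * ldu x = x.val := by exact_mod_cast hx1
    have a2 : (ldg x : ℤ) * ldu y = y.val := by exact_mod_cast hy1
    have a3 : (ldg x : ℤ) * (N / ldg x : ℕ) = N := by exact_mod_cast hN1
    rw [← mul_assoc, a3, ← hz, ← a1, ← a2]; ring
  have : (ldq x : ℤ) ∣ c * ldu x - ldu y := by
    rw [key]
    exact Dvd.dvd.mul_right (by exact_mod_cast ldq_dvd' x) _
  have h := (ZMod.intCast_zmod_eq_zero_iff_dvd _ (ldq x)).2 this
  push_cast at h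
  exact (sub_eq_zero.1 h).symm

def liftSet (N : ℕ) (T : ∀ q : ℕ, Set (ZMod q)) : Set (ZMod N) :=
  {x | x ≠ 0 ∧ ((ldu x : ℕ) : ZMod (ldq x)) ∈ T (ldq x)}

lemma T_congr (T : ∀ q : ℕ, Set (ZMod q)) {a b : ℕ} (h : a = b) (u : ℕ) :
    ((u : ZMod a) ∈ T a) ↔ ((u : ZMod b) ∈ T b) := by subst h; rfl

lemma cop_unit {N : ℕ} {c : ℤ} (hc : IsCoprime c (N : ℤ)) : IsUnit (c : ZMod N) := by
  obtain ⟨a, b, h⟩ := hc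
  have := congrArg (fun z : ℤ => (z : ZMod N)) h
  push_cast at this
  rw [ZMod.natCast_self, mul_zero, add_zero] at this
  exact IsUnit.of_mul_eq_one_right _ this

lemma lift_disj {N : ℕ} [NeZero N] (T : ∀ q : ℕ, Set (ZMod q)) {c c' : ℤ}
    (hc : IsCoprime c (N : ℤ)) (hc' : IsCoprime c' (N : ℤ)) {x y : ZMod N}
    (hx : x ∈ liftSet N T) (hy : y ∈ liftSet N T) (h : (c : ZMod N) * x = (c' : ZMod N) * y) :
    ∃ q : ℕ, q.Prime ∧ q ∣ N ∧ ∃ s ∈ T q, ∃ t ∈ T q, s ≠ 0 ∧ t ≠ 0 ∧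
      (c : ZMod q) * s = (c' : ZMod q) * t := by
  obtain ⟨a1, a2⟩ := ld_mul x c hc
  obtain ⟨b1, b2⟩ := ld_mul y c' hc'
  rw [← h] at b1 b2
  have hq : ldq y = ldq x := b1.symm.trans a1
  refine ⟨ldq x, ldq_prime hx.1, ldq_dvd x, _, hx.2, (ldu y : ℕ), (T_congr T hq _).1 hy.2,
    ldu_ne hx.1, ?_, ?_⟩
  · have := ldu_ne hy.1
    rwa [hq] at this
  · rw [← a2]
    rwa [hq] at b2

lemma lift_cover {N : ℕ} [NeZero N] (T : ∀ q : ℕ, Set (ZMod q)) (C : Finset ℤ)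
    (hC : ∀ c ∈ C, IsCoprime c (N : ℤ))
    (h : ∀ q : ℕ, q.Prime → q ∣ N → ∀ z : ZMod q, z ≠ 0 → ∃ c ∈ C, ∃ t ∈ T q, z = (c : ZMod q) * t)
    (x : ZMod N) (hx : x ≠ 0) : ∃ c ∈ C, ∃ y ∈ liftSet N T, x = (c : ZMod N) * y := by
  obtain ⟨c, hc, t, ht, hz⟩ := h (ldq x) (ldq_prime hx) (ldq_dvd x) _ (ldu_ne hx)
  obtain ⟨v, hv⟩ := cop_unit (hC c hc)
  refine ⟨c, hc, ((v⁻¹ : (ZMod N)ˣ) : ZMod N) * x, ?_, ?_⟩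
  · have hxy : (c : ZMod N) * (((v⁻¹ : (ZMod N)ˣ) : ZMod N) * x) = x := by rw [← hv]; simp
    obtain ⟨a1, a2⟩ := ld_mul (((v⁻¹ : (ZMod N)ˣ) : ZMod N) * x) c (hC c hc)
    rw [hxy] at a1 a2
    set y := ((v⁻¹ : (ZMod N)ˣ) : ZMod N) * x with hy
    refine ⟨?_, ?_⟩
    · intro h0; rw [h0, mul_zero] at hxy; exact hx hxy.symm
    · rw [T_congr T a1.symm]
      rw [← a1] at a2
      rw [hz] at a2
      have hu : IsUnit (c : ZMod (ldq x)) :=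
        cop_unit ((hC c hc).of_isCoprime_of_dvd_right (by exact_mod_cast ldq_dvd x))
      have := hu.mul_left_cancel a2
      rwa [← this]
  · rw [← hv]; simp

noncomputable def Cs (k : ℕ) : Finset ℤ := (Finset.Icc (-(k : ℤ)) k).erase 0

lemma Cs_card (k : ℕ) : (Cs k).card = 2 * k := by
  unfold Cs
  rw [Finset.card_erase_of_mem (by simp)]
  simp; omega

lemma mem_Cs {k : ℕ} {c : ℤ} : c ∈ Cs k ↔ c ≠ 0 ∧ -(k : ℤ) ≤ c ∧ c ≤ k := by
  simp [Cs]

lemma Cs_cop {k N : ℕ} (_hN0 : 0 < N) (hN : ∀ q : ℕ, q.Prime → q ∣ N → 2 * k + 1 ≤ q) {c : ℤ} (hc : c ≠ 0)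
    (h1 : -(2 * k : ℤ) ≤ c) (h2 : c ≤ 2 * k) : IsCoprime c (N : ℤ) := by
  rw [Int.isCoprime_iff_gcd_eq_one]
  by_contra h
  obtain ⟨q, hq, h3⟩ := Nat.exists_prime_and_dvd h
  have a1 : (q : ℤ) ∣ c := (Int.natCast_dvd_natCast.2 h3).trans (Int.gcd_dvd_left _ _)
  have a2 : (q : ℤ) ∣ N := (Int.natCast_dvd_natCast.2 h3).trans (Int.gcd_dvd_right _ _)
  have a3 := hN q hq (by exact_mod_cast a2)
  have a4 := Int.le_of_dvd (by positivity) ((dvd_abs _ _).2 a1)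
  have : |c| ≤ 2 * k := abs_le.2 ⟨h1, h2⟩
  omega

lemma cac_level {k q : ℕ} (hk : 0 < k) (hq : q.Prime) (hqk : 2 * k ∣ q - 1)
    (C : Finset (Finset (ZMod q))) (h1 : IsCAC q (k + 1) C) (h2 : ∀ S ∈ C, IsEquiDiff (k + 1) S)
    (h3 : C.card = (q - 1) / (2 * k)) :
    ∃ T : Set (ZMod q), (∀ s ∈ T, ∀ t ∈ T, ∀ c ∈ Cs k, ∀ c' ∈ Cs k,
      (c : ZMod q) * s = (c' : ZMod q) * t → c = c') ∧
      ∀ z : ZMod q, z ≠ 0 → ∃ c ∈ Cs k, ∃ t ∈ T, z = (c : ZMod q) * t := by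
  classical
  have : Fact q.Prime := ⟨hq⟩
  have hq2 : 2 * k + 1 ≤ q := by
    have := Nat.le_of_dvd (by have := hq.two_le; omega) hqk
    have := hq.two_le
    omega
  choose! g hg using h2
  have hg0 : ∀ S ∈ C, g S ≠ 0 := by
    intro S hS h0
    have a := h1.1 S hS
    rw [hg S hS, h0] at a
    have : ((Finset.range (k + 1)).image fun j : ℕ => (j : ZMod q) * 0) ⊆ {0} := by
      intro x hx
      simp at hx
      simp [hx.2.symm]
    have := Finset.card_le_card this
    rw [a] at this
    simp at this
    omega
  have hcne : ∀ c ∈ Cs k, (c : ZMod q) ≠ 0 := by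
    intro c hc
    obtain ⟨a, b, d⟩ := mem_Cs.1 hc
    refine (cop_unit (Cs_cop (k := k) hq.pos ?_ a (by omega) (by omega))).ne_zero
    intro r hr hrq
    rwa [(Nat.prime_dvd_prime_iff_eq hr hq).1 hrq]
  have hmem : ∀ S ∈ C, ∀ c ∈ Cs k, (c : ZMod q) * g S ∈ dstar S := by
    intro S hS c hc
    refine Finset.mem_erase.2 ⟨mul_ne_zero (hcne c hc) (hg0 S hS), ?_⟩
    obtain ⟨a, b, d⟩ := mem_Cs.1 hc
    have hm : ∀ j : ℕ, j < k + 1 → (j : ZMod q) * g S ∈ S := by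
      intro j hj
      have : (j : ZMod q) * g S ∈ (Finset.range (k + 1)).image fun j : ℕ => (j : ZMod q) * g S :=
        Finset.mem_image.2 ⟨j, Finset.mem_range.2 hj, rfl⟩
      rwa [← hg S hS] at this
    have m0 := hm 0 (by omega)
    rw [Nat.cast_zero, zero_mul] at m0
    rcases le_total 0 c with hc0 | hc0
    · lift c to ℕ using hc0
      refine Finset.mem_image.2 ⟨((c : ZMod q) * g S, 0), Finset.mem_product.2 ⟨hm c (by omega), m0⟩, ?_⟩
      simp
    · obtain ⟨e, rfl⟩ : ∃ e, c = -e := ⟨-c, by simp⟩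
      have he : 0 ≤ e := by omega
      lift e to ℕ using he
      refine Finset.mem_image.2 ⟨(0, (e : ZMod q) * g S), Finset.mem_product.2 ⟨m0, hm e (by omega)⟩, ?_⟩
      simp
  have hinj : ∀ S ∈ C, ∀ S' ∈ C, ∀ c ∈ Cs k, ∀ c' ∈ Cs k,
      (c : ZMod q) * g S = (c' : ZMod q) * g S' → S = S' ∧ c = c' := by
    intro S hS S' hS' c hc c' hc' h
    have hSS : S = S' := by
      by_contra hne
      exact Finset.disjoint_left.1 (h1.2 S hS S' hS' hne) (hmem S hS c hc) (h ▸ hmem S' hS' c' hc')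
    refine ⟨hSS, ?_⟩
    subst hSS
    have h4 := mul_right_cancel₀ (hg0 S hS) h
    by_contra hne
    obtain ⟨a, b, d⟩ := mem_Cs.1 hc
    obtain ⟨a', b', d'⟩ := mem_Cs.1 hc'
    have := (cop_unit (N := q) (Cs_cop (k := k) (c := c - c') hq.pos
      (fun r hr hrq => by rwa [(Nat.prime_dvd_prime_iff_eq hr hq).1 hrq]) (by omega) (by omega) (by omega))).ne_zero
    apply this
    push_cast
    rw [h4, sub_self]
  refine ⟨g '' (C : Set (Finset (ZMod q))), ?_, ?_⟩
  · rintro _ ⟨S, hS, rfl⟩ _ ⟨S', hS', rfl⟩ c hc c' hc' h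
    exact (hinj S hS S' hS' c hc c' hc' h).2
  · intro z hz
    have himg : (C ×ˢ Cs k).image (fun x => (x.2 : ZMod q) * g x.1) = Finset.univ.erase 0 := by
      apply Finset.eq_of_subset_of_card_le
      · intro y hy
        obtain ⟨⟨S, c⟩, hx, rfl⟩ := Finset.mem_image.1 hy
        obtain ⟨hS, hc⟩ := Finset.mem_product.1 hx
        exact Finset.mem_erase.2 ⟨mul_ne_zero (hcne c hc) (hg0 S hS), Finset.mem_univ _⟩
      · rw [Finset.card_image_of_injOn, Finset.card_product, Cs_card, h3, Nat.div_mul_cancel hqk,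
          Finset.card_erase_of_mem (Finset.mem_univ _), Finset.card_univ, ZMod.card]
        rintro ⟨S, c⟩ hx ⟨S', c'⟩ hx' h
        obtain ⟨hS, hc⟩ := Finset.mem_product.1 hx
        obtain ⟨hS', hc'⟩ := Finset.mem_product.1 hx'
        obtain ⟨a, b⟩ := hinj S hS S' hS' c hc c' hc' h
        rw [a, b]
    have : z ∈ (C ×ˢ Cs k).image (fun x => (x.2 : ZMod q) * g x.1) := by
      rw [himg]; exact Finset.mem_erase.2 ⟨hz, Finset.mem_univ _⟩
    obtain ⟨⟨S, c⟩, hx, rfl⟩ := Finset.mem_image.1 this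
    obtain ⟨hS, hc⟩ := Finset.mem_product.1 hx
    exact ⟨c, hc, g S, ⟨S, hS, rfl⟩, rfl⟩

lemma cover_card {N : ℕ} [NeZero N] (C : Finset ℤ) (R : Finset (ZMod N))
    (h : ∀ x : ZMod N, x ≠ 0 → ∃ c ∈ C, ∃ y ∈ R, x = (c : ZMod N) * y) :
    N - 1 ≤ C.card * R.card := by
  have : (Finset.univ.erase (0 : ZMod N)) ⊆ (C ×ˢ R).image fun x => (x.1 : ZMod N) * x.2 := by
    intro x hx
    obtain ⟨c, hc, y, hy, rfl⟩ := h x (Finset.mem_erase.1 hx).1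
    exact Finset.mem_image.2 ⟨(c, y), Finset.mem_product.2 ⟨hc, hy⟩, rfl⟩
  have := (Finset.card_le_card this).trans Finset.card_image_le
  rwa [Finset.card_erase_of_mem (Finset.mem_univ _), Finset.card_univ, ZMod.card,
    Finset.card_product] at this

lemma exists_Gamma {k N : ℕ} [NeZero N] (hk : 0 < k)
    (hN : ∀ q : ℕ, q.Prime → q ∣ N → 2 * k ∣ q - 1 ∧ ∃ C : Finset (Finset (ZMod q)),
      IsCAC q (k + 1) C ∧ (∀ S ∈ C, IsEquiDiff (k + 1) S) ∧ C.card = (q - 1) / (2 * k))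
    (hN' : ∀ q : ℕ, q.Prime → q ∣ N → 2 * k + 1 ≤ q) :
    ∃ Γ : Finset (ZMod N), 0 ∉ Γ ∧ (∀ s ∈ Γ, ∀ t ∈ Γ, ∀ c ∈ Cs k, ∀ c' ∈ Cs k,
      (c : ZMod N) * s = (c' : ZMod N) * t → s = t) ∧ N - 1 ≤ 2 * k * Γ.card := by
  classical
  have hlev : ∀ q : ℕ, ∃ T : Set (ZMod q), q.Prime → q ∣ N →
      (∀ s ∈ T, ∀ t ∈ T, ∀ c ∈ Cs k, ∀ c' ∈ Cs k,
      (c : ZMod q) * s = (c' : ZMod q) * t → c = c') ∧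
      ∀ z : ZMod q, z ≠ 0 → ∃ c ∈ Cs k, ∃ t ∈ T, z = (c : ZMod q) * t := by
    intro q
    by_cases h : q.Prime ∧ q ∣ N
    · obtain ⟨h1, C, h2, h3, h4⟩ := hN q h.1 h.2
      obtain ⟨T, hT⟩ := cac_level hk h.1 h1 C h2 h3 h4
      exact ⟨T, fun _ _ => hT⟩
    · exact ⟨∅, fun a b => (h ⟨a, b⟩).elim⟩
  choose T hT using hlev
  have hcop : ∀ c ∈ Cs k, IsCoprime c (N : ℤ) := by
    intro c hc
    obtain ⟨a, b, d⟩ := mem_Cs.1 hc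
    exact Cs_cop (NeZero.pos N) hN' a (by omega) (by omega)
  refine ⟨Finset.univ.filter (fun x => x ∈ liftSet N T), ?_, ?_, ?_⟩
  · intro h
    exact (Finset.mem_filter.1 h).2.1 rfl
  · intro s hs t ht c hc c' hc' h
    obtain ⟨q, hq, hqN, s', hs', t', ht', _, _, h'⟩ := lift_disj T (hcop c hc) (hcop c' hc')
      (Finset.mem_filter.1 hs).2 (Finset.mem_filter.1 ht).2 h
    have := (hT q hq hqN).1 s' hs' t' ht' c hc c' hc' h'
    subst this
    exact (cop_unit (hcop c hc)).mul_left_cancel h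
  · rw [← Cs_card]
    apply cover_card
    intro x hx
    obtain ⟨c, hc, y, hy, e⟩ := lift_cover T (Cs k) hcop (fun q hq hqN => (hT q hq hqN).2) x hx
    exact ⟨c, hc, y, Finset.mem_filter.2 ⟨Finset.mem_univ _, hy⟩, e⟩

lemma exists_R {k N : ℕ} [NeZero N]
    (hN' : ∀ q : ℕ, q.Prime → q ∣ N → 2 * k + 1 ≤ q)
    (hQ : ∀ (q : ℕ) (hq : q.Prime), q ∣ N → @legendreSym q ⟨hq⟩ (-1) = -1 ∧
      ∀ j : ℕ, 1 ≤ j → j ≤ k - 1 →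
      @legendreSym q ⟨hq⟩ (j : ℤ) * @legendreSym q ⟨hq⟩ ((j : ℤ) - k) = -1) :
    ∃ R : Finset (ZMod N), 0 ∉ R ∧ (∀ s ∈ R, ∀ t ∈ R, s ≠ - t) ∧
      (∀ s ∈ R, ∀ t ∈ R, ∀ j : ℤ, 1 ≤ j → j ≤ k - 1 →
        (j : ZMod N) * s ≠ ((j - k : ℤ) : ZMod N) * t) ∧ N - 1 ≤ 2 * R.card := by
  classical
  let T : ∀ q : ℕ, Set (ZMod q) := fun q => {z | z ≠ 0 ∧ IsSquare z}
  have key : ∀ (c c' : ℤ), IsCoprime c (N : ℤ) → IsCoprime c' (N : ℤ) →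
      (∀ (q : ℕ) (hq : q.Prime), q ∣ N → @legendreSym q ⟨hq⟩ c * @legendreSym q ⟨hq⟩ c' = -1) →
      ∀ s ∈ liftSet N T, ∀ t ∈ liftSet N T, (c : ZMod N) * s ≠ (c' : ZMod N) * t := by
    intro c c' hc hc' hl s hs t ht h
    obtain ⟨q, hq, hqN, s', hs', t', ht', hs0, ht0, h'⟩ := lift_disj T hc hc' hs ht h
    have : Fact q.Prime := ⟨hq⟩
    have h1 := hl q hq hqN
    unfold legendreSym at h1
    have h2 := congrArg (quadraticChar (ZMod q)) h'
    rw [map_mul, map_mul, (quadraticChar_one_iff_isSquare hs0).2 hs'.2,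
      (quadraticChar_one_iff_isSquare ht0).2 ht'.2, mul_one, mul_one] at h2
    rw [h2] at h1
    nlinarith [mul_self_nonneg (quadraticChar (ZMod q) (c' : ZMod q))]
  refine ⟨Finset.univ.filter (fun x => x ∈ liftSet N T), ?_, ?_, ?_, ?_⟩
  · intro h
    exact (Finset.mem_filter.1 h).2.1 rfl
  · intro s hs t ht h
    refine key 1 (-1) isCoprime_one_left isCoprime_one_left.neg_left ?_ s (Finset.mem_filter.1 hs).2 t
      (Finset.mem_filter.1 ht).2 ?_
    · intro q hq hqN
      have : Fact q.Prime := ⟨hq⟩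
      rw [(hQ q hq hqN).1, legendreSym.at_one]
      norm_num
    · push_cast; rw [h]; ring
  · intro s hs t ht j hj1 hj2
    refine key j (j - k) (Cs_cop (NeZero.pos N) hN' (by omega) (by omega) (by omega))
      (Cs_cop (NeZero.pos N) hN' (by omega) (by omega) (by omega)) ?_ s (Finset.mem_filter.1 hs).2 t
      (Finset.mem_filter.1 ht).2
    intro q hq hqN
    lift j to ℕ using (by omega)
    exact (hQ q hq hqN).2 j (by omega) (by omega)
  · have : ({1, -1} : Finset ℤ).card = 2 := by decide
    rw [← this]
    apply cover_card
    intro x hx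
    obtain ⟨c, hc, y, hy, e⟩ := lift_cover T {1, -1} (by
      intro c hc
      simp only [Finset.mem_insert, Finset.mem_singleton] at hc
      rcases hc with rfl | rfl
      · exact isCoprime_one_left
      · exact isCoprime_one_left.neg_left) (by
      intro q hq hqN z hz
      have : Fact q.Prime := ⟨hq⟩
      have h1 := (hQ q hq hqN).1
      unfold legendreSym at h1
      push_cast at h1
      rcases quadraticChar_dichotomy hz with h | h
      · exact ⟨1, by simp, z, ⟨hz, (quadraticChar_one_iff_isSquare hz).1 h⟩, by simp⟩
      · refine ⟨-1, by simp, -z, ⟨neg_ne_zero.2 hz, (quadraticChar_one_iff_isSquare (neg_ne_zero.2 hz)).1 ?_⟩, by simp⟩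
        rw [← neg_one_mul, map_mul, h1, h]; norm_num) x hx
    exact ⟨c, hc, y, Finset.mem_filter.2 ⟨Finset.mem_univ _, hy⟩, e⟩

lemma mem_Darr {L : ℕ} (S : Finset (Fin 2 × ZMod L)) (i j : Fin 2) (t : ZMod L) :
    t ∈ Darr S i j ↔ (i = j → t ≠ 0) ∧ ∃ a b, (i, a) ∈ S ∧ (j, b) ∈ S ∧ t = a - b := by
  have hch : ∀ (i : Fin 2) (a : ZMod L), a ∈ chan S i ↔ (i, a) ∈ S := by
    intro i a
    simp only [chan, Finset.mem_image, Finset.mem_filter]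
    constructor
    · rintro ⟨⟨x, y⟩, ⟨h1, rfl⟩, rfl⟩; exact h1
    · intro h; exact ⟨(i, a), ⟨h, rfl⟩, rfl⟩
  have him : t ∈ ((chan S i) ×ˢ (chan S j)).image (fun p => p.1 - p.2) ↔
      ∃ a b, (i, a) ∈ S ∧ (j, b) ∈ S ∧ t = a - b := by
    simp only [Finset.mem_image, Finset.mem_product, hch]
    constructor
    · rintro ⟨⟨a, b⟩, ⟨h1, h2⟩, rfl⟩; exact ⟨a, b, h1, h2, rfl⟩
    · rintro ⟨a, b, h1, h2, rfl⟩; exact ⟨(a, b), ⟨h1, h2⟩, rfl⟩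
  unfold Darr
  split_ifs with h
  · rw [Finset.mem_erase, him]; simp [h]
  · rw [him]; simp [h]

def W0 {k N L : ℕ} (e : ZMod k × ZMod N ≃+ ZMod L) (g : ZMod N) : Finset (Fin 2 × ZMod L) :=
  insert (1, 0) ((Finset.range k).image fun j : ℕ => ((0 : Fin 2), e ((j : ZMod k), ((j : ZMod N) + 1) * g)))

def W1 {k N L : ℕ} (e : ZMod k × ZMod N ≃+ ZMod L) (g : ZMod N) : Finset (Fin 2 × ZMod L) :=
  insert (0, 0) ((Finset.range k).image fun j : ℕ => ((1 : Fin 2), e (-(j : ZMod k), ((j : ZMod N) + 1) * g)))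

def W2 {k N L : ℕ} (e : ZMod k × ZMod N ≃+ ZMod L) (c : Fin 2) (g : ZMod N) : Finset (Fin 2 × ZMod L) :=
  (Finset.range (k + 1)).image fun j : ℕ => (c, e (0, (j : ZMod N) * g))

lemma mem_W0 {k N L : ℕ} (e : ZMod k × ZMod N ≃+ ZMod L) (g : ZMod N) (i : Fin 2) (a : ZMod L) :
    (i, a) ∈ W0 e g ↔ (i = 1 ∧ a = 0) ∨
      (i = 0 ∧ ∃ j : ℕ, j < k ∧ a = e ((j : ZMod k), ((j : ZMod N) + 1) * g)) := by
  simp only [W0, Finset.mem_insert, Finset.mem_image, Finset.mem_range, Prod.mk.injEq]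
  constructor
  · rintro (h | ⟨j, h1, h2, h3⟩)
    · exact Or.inl h
    · exact Or.inr ⟨h2.symm, j, h1, h3.symm⟩
  · rintro (h | ⟨h2, j, h1, h3⟩)
    · exact Or.inl h
    · exact Or.inr ⟨j, h1, h2.symm, h3.symm⟩

lemma mem_W1 {k N L : ℕ} (e : ZMod k × ZMod N ≃+ ZMod L) (g : ZMod N) (i : Fin 2) (a : ZMod L) :
    (i, a) ∈ W1 e g ↔ (i = 0 ∧ a = 0) ∨
      (i = 1 ∧ ∃ j : ℕ, j < k ∧ a = e (-(j : ZMod k), ((j : ZMod N) + 1) * g)) := by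
  simp only [W1, Finset.mem_insert, Finset.mem_image, Finset.mem_range, Prod.mk.injEq]
  constructor
  · rintro (h | ⟨j, h1, h2, h3⟩)
    · exact Or.inl h
    · exact Or.inr ⟨h2.symm, j, h1, h3.symm⟩
  · rintro (h | ⟨h2, j, h1, h3⟩)
    · exact Or.inl h
    · exact Or.inr ⟨j, h1, h2.symm, h3.symm⟩

lemma mem_W2 {k N L : ℕ} (e : ZMod k × ZMod N ≃+ ZMod L) (c : Fin 2) (g : ZMod N) (i : Fin 2) (a : ZMod L) :
    (i, a) ∈ W2 e c g ↔ i = c ∧ ∃ j : ℕ, j < k + 1 ∧ a = e (0, (j : ZMod N) * g) := by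
  simp only [W2, Finset.mem_image, Finset.mem_range, Prod.mk.injEq]
  constructor
  · rintro ⟨j, h1, h2, h3⟩
    exact ⟨h2.symm, j, h1, h3.symm⟩
  · rintro ⟨h2, j, h1, h3⟩
    exact ⟨j, h1, h2.symm, h3.symm⟩

lemma W2_same {k N L : ℕ} (e : ZMod k × ZMod N ≃+ ZMod L) (c : Fin 2) (g : ZMod N) (t : ZMod L)
    (h : t ∈ Darr (W2 e c g) c c) : ∃ d ∈ Cs k, t = e (0, (d : ZMod N) * g) := by
  obtain ⟨h0, a, b, ha, hb, rfl⟩ := (mem_Darr _ _ _ _).1 h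
  obtain ⟨_, j, hj, rfl⟩ := (mem_W2 _ _ _ _ _).1 ha
  obtain ⟨_, j', hj', rfl⟩ := (mem_W2 _ _ _ _ _).1 hb
  refine ⟨(j : ℤ) - j', mem_Cs.2 ⟨?_, by omega, by omega⟩, ?_⟩
  · intro h
    apply h0 rfl
    have : j = j' := by omega
    rw [this, sub_self]
  · rw [← map_sub]; congr 1; ext <;> push_cast <;> simp [sub_mul]

lemma W0_same {k N L : ℕ} (e : ZMod k × ZMod N ≃+ ZMod L) (g : ZMod N) (t : ZMod L)
    (h : t ∈ Darr (W0 e g) 0 0) : ∃ d : ℤ, d ≠ 0 ∧ -(k : ℤ) < d ∧ d < k ∧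
      t = e ((d : ZMod k), (d : ZMod N) * g) := by
  obtain ⟨h0, a, b, ha, hb, rfl⟩ := (mem_Darr _ _ _ _).1 h
  rcases (mem_W0 _ _ _ _).1 ha with ⟨h1, _⟩ | ⟨_, j, hj, rfl⟩
  · exact absurd h1 (by decide)
  rcases (mem_W0 _ _ _ _).1 hb with ⟨h1, _⟩ | ⟨_, j', hj', rfl⟩
  · exact absurd h1 (by decide)
  refine ⟨(j : ℤ) - j', ?_, by omega, by omega, ?_⟩
  · intro h
    apply h0 rfl
    have : j = j' := by omega
    rw [this, sub_self]
  · rw [← map_sub]; congr 1; ext <;> push_cast <;> simp; ring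

lemma W1_same {k N L : ℕ} (e : ZMod k × ZMod N ≃+ ZMod L) (g : ZMod N) (t : ZMod L)
    (h : t ∈ Darr (W1 e g) 1 1) : ∃ d : ℤ, d ≠ 0 ∧ -(k : ℤ) < d ∧ d < k ∧
      t = e (-(d : ZMod k), (d : ZMod N) * g) := by
  obtain ⟨h0, a, b, ha, hb, rfl⟩ := (mem_Darr _ _ _ _).1 h
  rcases (mem_W1 _ _ _ _).1 ha with ⟨h1, _⟩ | ⟨_, j, hj, rfl⟩
  · exact absurd h1 (by decide)
  rcases (mem_W1 _ _ _ _).1 hb with ⟨h1, _⟩ | ⟨_, j', hj', rfl⟩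
  · exact absurd h1 (by decide)
  refine ⟨(j : ℤ) - j', ?_, by omega, by omega, ?_⟩
  · intro h
    apply h0 rfl
    have : j = j' := by omega
    rw [this, sub_self]
  · rw [← map_sub]; congr 1; ext <;> push_cast <;> simp <;> ring

lemma W0_other {k N L : ℕ} (e : ZMod k × ZMod N ≃+ ZMod L) (g : ZMod N) (t : ZMod L) :
    t ∉ Darr (W0 e g) 1 1 := by
  intro h
  obtain ⟨h0, a, b, ha, hb, rfl⟩ := (mem_Darr _ _ _ _).1 h
  rcases (mem_W0 _ _ _ _).1 ha with ⟨_, rfl⟩ | ⟨h1, _⟩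
  · rcases (mem_W0 _ _ _ _).1 hb with ⟨_, rfl⟩ | ⟨h1, _⟩
    · exact h0 rfl (sub_self _)
    · exact absurd h1 (by decide)
  · exact absurd h1 (by decide)

lemma W1_other {k N L : ℕ} (e : ZMod k × ZMod N ≃+ ZMod L) (g : ZMod N) (t : ZMod L) :
    t ∉ Darr (W1 e g) 0 0 := by
  intro h
  obtain ⟨h0, a, b, ha, hb, rfl⟩ := (mem_Darr _ _ _ _).1 h
  rcases (mem_W1 _ _ _ _).1 ha with ⟨_, rfl⟩ | ⟨h1, _⟩
  · rcases (mem_W1 _ _ _ _).1 hb with ⟨_, rfl⟩ | ⟨h1, _⟩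
    · exact h0 rfl (sub_self _)
    · exact absurd h1 (by decide)
  · exact absurd h1 (by decide)

lemma W2_other {k N L : ℕ} (e : ZMod k × ZMod N ≃+ ZMod L) (c : Fin 2) (g : ZMod N) (t : ZMod L)
    (i j : Fin 2) (h : t ∈ Darr (W2 e c g) i j) : i = c ∧ j = c := by
  obtain ⟨h0, a, b, ha, hb, rfl⟩ := (mem_Darr _ _ _ _).1 h
  exact ⟨((mem_W2 _ _ _ _ _).1 ha).1, ((mem_W2 _ _ _ _ _).1 hb).1⟩

lemma W0_cross {k N L : ℕ} (e : ZMod k × ZMod N ≃+ ZMod L) (g : ZMod N) (t : ZMod L)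
    (h : t ∈ Darr (W0 e g) 0 1) : ∃ j : ℕ, j < k ∧ t = e ((j : ZMod k), ((j : ZMod N) + 1) * g) := by
  obtain ⟨h0, a, b, ha, hb, rfl⟩ := (mem_Darr _ _ _ _).1 h
  rcases (mem_W0 _ _ _ _).1 ha with ⟨h1, _⟩ | ⟨_, j, hj, rfl⟩
  · exact absurd h1 (by decide)
  rcases (mem_W0 _ _ _ _).1 hb with ⟨_, rfl⟩ | ⟨h1, _⟩
  · exact ⟨j, hj, sub_zero _⟩
  · exact absurd h1 (by decide)

lemma W1_cross {k N L : ℕ} (e : ZMod k × ZMod N ≃+ ZMod L) (g : ZMod N) (t : ZMod L)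
    (h : t ∈ Darr (W1 e g) 0 1) : ∃ j : ℕ, j < k ∧ t = e ((j : ZMod k), ((j : ZMod N) + 1) * -g) := by
  obtain ⟨h0, a, b, ha, hb, rfl⟩ := (mem_Darr _ _ _ _).1 h
  rcases (mem_W1 _ _ _ _).1 hb with ⟨h1, _⟩ | ⟨_, j, hj, rfl⟩
  · exact absurd h1 (by decide)
  rcases (mem_W1 _ _ _ _).1 ha with ⟨_, rfl⟩ | ⟨h1, _⟩
  · refine ⟨j, hj, ?_⟩
    rw [zero_sub, ← map_neg]; congr 1; ext <;> simp
  · exact absurd h1 (by decide)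

lemma cast_inj_lt {k : ℕ} {i j : ℕ} (hi : i < k) (hj : j < k) (h : (i : ZMod k) = j) : i = j := by
  have := (ZMod.natCast_eq_natCast_iff' i j k).1 h
  rwa [Nat.mod_eq_of_lt hi, Nat.mod_eq_of_lt hj] at this

lemma W0_card {k N L : ℕ} (e : ZMod k × ZMod N ≃+ ZMod L) (g : ZMod N) : (W0 e g).card = k + 1 := by
  unfold W0
  rw [Finset.card_insert_of_notMem, Finset.card_image_of_injOn, Finset.card_range]
  · intro i hi j hj h
    simp only [Prod.mk.injEq, EmbeddingLike.apply_eq_iff_eq] at h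
    exact cast_inj_lt (by simpa using hi) (by simpa using hj) h.2.1
  · simp

lemma W1_card {k N L : ℕ} (e : ZMod k × ZMod N ≃+ ZMod L) (g : ZMod N) : (W1 e g).card = k + 1 := by
  unfold W1
  rw [Finset.card_insert_of_notMem, Finset.card_image_of_injOn, Finset.card_range]
  · intro i hi j hj h
    simp only [Prod.mk.injEq, EmbeddingLike.apply_eq_iff_eq, neg_inj] at h
    exact cast_inj_lt (by simpa using hi) (by simpa using hj) h.2.1
  · simp

lemma W2_card {k N L : ℕ} (e : ZMod k × ZMod N ≃+ ZMod L) (c : Fin 2) (g : ZMod N) (hg : g ≠ 0)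
    (hu : ∀ c : ℤ, c ≠ 0 → -(k : ℤ) ≤ c → c ≤ k → IsUnit (c : ZMod N)) : (W2 e c g).card = k + 1 := by
  unfold W2
  rw [Finset.card_image_of_injOn, Finset.card_range]
  intro i hi j hj h
  simp only [Prod.mk.injEq, EmbeddingLike.apply_eq_iff_eq, true_and] at h
  simp only [Finset.coe_range, Set.mem_Iio] at hi hj
  by_contra hne
  have := hu ((i : ℤ) - j) (by omega) (by omega) (by omega)
  apply hg
  rw [← this.mul_right_eq_zero]
  push_cast
  rw [sub_mul, h, sub_self]

lemma coreD {k N : ℕ} {R : Finset (ZMod N)}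
    (hu : ∀ c : ℤ, c ≠ 0 → -(k : ℤ) ≤ c → c ≤ k → IsUnit (c : ZMod N))
    (hR : ∀ s ∈ R, ∀ t ∈ R, ∀ j : ℤ, 1 ≤ j → j ≤ k - 1 →
        (j : ZMod N) * s ≠ ((j - k : ℤ) : ZMod N) * t)
    {g g' : ZMod N} (hg : g ∈ insert 0 R) (hg' : g' ∈ insert 0 R) {d d' : ℤ}
    (h1 : d ≠ 0) (h2 : -(k : ℤ) < d) (h3 : d < k) (h1' : d' ≠ 0) (h2' : -(k : ℤ) < d') (h3' : d' < k)
    (hd : (d : ZMod k) = d') (h : (d : ZMod N) * g = (d' : ZMod N) * g') : g = g' := by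
  have ud := hu d h1 h2.le h3.le
  have ud' := hu d' h1' h2'.le h3'.le
  by_cases e0 : g = 0
  · rw [e0, mul_zero, eq_comm, ud'.mul_right_eq_zero] at h
    rw [e0, h]
  by_cases e0' : g' = 0
  · rw [e0', mul_zero, ud.mul_right_eq_zero] at h
    exact absurd h e0
  have gR := (Finset.mem_insert.1 hg).resolve_left e0
  have gR' := (Finset.mem_insert.1 hg').resolve_left e0'
  by_cases hdd : d = d'
  · subst hdd; exact ud.mul_left_cancel h
  exfalso
  obtain ⟨z, hz⟩ := (ZMod.intCast_eq_intCast_iff_dvd_sub _ _ _).1 hd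
  have hk : (0 : ℤ) < k := by omega
  have z1 : z < 2 := by by_contra hh; push Not at hh; nlinarith
  have z2 : -2 < z := by by_contra hh; push Not at hh; nlinarith
  have z3 : z = -1 ∨ z = 0 ∨ z = 1 := by omega
  rcases z3 with rfl | rfl | rfl
  · have : d' = d - k := by linarith
    subst this
    exact hR g gR g' gR' d (by omega) (by omega) h
  · omega
  · have : d = d' - k := by linarith
    subst this
    exact hR g' gR' g gR d' (by omega) (by omega) h.symm

abbrev Idx (N : ℕ) := (ZMod N ⊕ ZMod N) ⊕ (ZMod N ⊕ ZMod N)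

def Fam {k N L : ℕ} (e : ZMod k × ZMod N ≃+ ZMod L) : Idx N → Finset (Fin 2 × ZMod L)
  | .inl (.inl g) => W0 e g
  | .inl (.inr g) => W1 e g
  | .inr (.inl g) => W2 e 0 g
  | .inr (.inr g) => W2 e 1 g

lemma construct {k N L : ℕ} (hk : 0 < k) (e : ZMod k × ZMod N ≃+ ZMod L) (R Γ : Finset (ZMod N))
    (hu : ∀ c : ℤ, c ≠ 0 → -(k : ℤ) ≤ c → c ≤ k → IsUnit (c : ZMod N))
    (hR0 : 0 ∉ R) (hR1 : ∀ s ∈ R, ∀ t ∈ R, s ≠ - t)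
    (hR : ∀ s ∈ R, ∀ t ∈ R, ∀ j : ℤ, 1 ≤ j → j ≤ k - 1 →
        (j : ZMod N) * s ≠ ((j - k : ℤ) : ZMod N) * t)
    (hG0 : 0 ∉ Γ) (hG : ∀ s ∈ Γ, ∀ t ∈ Γ, ∀ c ∈ Cs k, ∀ c' ∈ Cs k,
      (c : ZMod N) * s = (c' : ZMod N) * t → s = t) :
    ∃ C : Finset (Finset (Fin 2 × ZMod L)), IsMCCAC 2 L (k + 1) C ∧
      C.card = 2 * R.card + 1 + 2 * Γ.card := by
  classical
  let I : Finset (Idx N) := ((insert 0 R).disjSum R).disjSum (Γ.disjSum Γ)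
  have hcard : ∀ α ∈ I, (Fam e α).card = k + 1 := by
    rintro ((g | g) | (g | g)) h
    · exact W0_card e g
    · exact W1_card e g
    · simp only [I, Finset.inr_mem_disjSum, Finset.inl_mem_disjSum] at h
      exact W2_card e 0 g (fun h0 => hG0 (h0 ▸ h)) hu
    · simp only [I, Finset.inr_mem_disjSum] at h
      exact W2_card e 1 g (fun h0 => hG0 (h0 ▸ h)) hu
  have hdne : ∀ d : ℤ, d ≠ 0 → -(k : ℤ) < d → d < k → (d : ZMod k) ≠ 0 := by
    intro d h1 h2 h3 h
    rw [ZMod.intCast_zmod_eq_zero_iff_dvd] at h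
    have := Int.eq_zero_of_abs_lt_dvd h (abs_lt.2 ⟨h2, h3⟩)
    exact h1 this
  have hsucc : ∀ j : ℕ, j < k → IsUnit ((j : ZMod N) + 1) := by
    intro j hj
    have := hu ((j : ℤ) + 1) (by omega) (by omega) (by omega)
    push_cast at this
    exact this
  have D00 : ∀ α ∈ I, ∀ β ∈ I, ∀ t, t ∈ Darr (Fam e α) 0 0 → t ∈ Darr (Fam e β) 0 0 → α = β := by
    have ch : ∀ α ∈ I, ∀ t, t ∈ Darr (Fam e α) 0 0 →
      (∃ g ∈ insert 0 R, α = .inl (.inl g) ∧ ∃ d : ℤ, d ≠ 0 ∧ -(k : ℤ) < d ∧ d < k ∧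
        t = e ((d : ZMod k), (d : ZMod N) * g)) ∨
      (∃ g ∈ Γ, α = .inr (.inl g) ∧ ∃ d ∈ Cs k, t = e (0, (d : ZMod N) * g)) := by
      rintro ((g | g) | (g | g)) h t ht
      · exact Or.inl ⟨g, by simpa [I] using h, rfl, W0_same e g t ht⟩
      · exact absurd ht (W1_other e g t)
      · exact Or.inr ⟨g, by simpa [I] using h, rfl, W2_same e 0 g t ht⟩
      · exact absurd (W2_other e 1 g t 0 0 ht).1 (by decide)
    intro α hα β hβ t h1 h2
    rcases ch α hα t h1 with ⟨g, hg, rfl, d, a1, a2, a3, rfl⟩ | ⟨g, hg, rfl, d, a1, rfl⟩ <;>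
    rcases ch β hβ _ h2 with ⟨g', hg', rfl, d', b1, b2, b3, h⟩ | ⟨g', hg', rfl, d', b1, h⟩ <;>
    simp only [EmbeddingLike.apply_eq_iff_eq, Prod.mk.injEq] at h
    · rw [coreD hu hR hg hg' a1 a2 a3 b1 b2 b3 h.1 h.2]
    · exact absurd h.1 (hdne d a1 a2 a3)
    · exact absurd h.1.symm (hdne d' b1 b2 b3)
    · rw [hG g hg g' hg' d a1 d' b1 h.2]
  have D11 : ∀ α ∈ I, ∀ β ∈ I, ∀ t, t ∈ Darr (Fam e α) 1 1 → t ∈ Darr (Fam e β) 1 1 → α = β := by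
    have ch : ∀ α ∈ I, ∀ t, t ∈ Darr (Fam e α) 1 1 →
      (∃ g ∈ R, α = .inl (.inr g) ∧ ∃ d : ℤ, d ≠ 0 ∧ -(k : ℤ) < d ∧ d < k ∧
        t = e (-(d : ZMod k), (d : ZMod N) * g)) ∨
      (∃ g ∈ Γ, α = .inr (.inr g) ∧ ∃ d ∈ Cs k, t = e (0, (d : ZMod N) * g)) := by
      rintro ((g | g) | (g | g)) h t ht
      · exact absurd ht (W0_other e g t)
      · exact Or.inl ⟨g, by simpa [I] using h, rfl, W1_same e g t ht⟩
      · exact absurd (W2_other e 0 g t 1 1 ht).1 (by decide)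
      · exact Or.inr ⟨g, by simpa [I] using h, rfl, W2_same e 1 g t ht⟩
    intro α hα β hβ t h1 h2
    rcases ch α hα t h1 with ⟨g, hg, rfl, d, a1, a2, a3, rfl⟩ | ⟨g, hg, rfl, d, a1, rfl⟩ <;>
    rcases ch β hβ _ h2 with ⟨g', hg', rfl, d', b1, b2, b3, h⟩ | ⟨g', hg', rfl, d', b1, h⟩ <;>
    simp only [EmbeddingLike.apply_eq_iff_eq, Prod.mk.injEq] at h
    · rw [coreD hu hR (Finset.mem_insert_of_mem hg) (Finset.mem_insert_of_mem hg') a1 a2 a3 b1 b2 b3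
        (neg_injective h.1) h.2]
    · exact absurd (neg_eq_zero.1 h.1) (hdne d a1 a2 a3)
    · exact absurd (neg_eq_zero.1 h.1.symm) (hdne d' b1 b2 b3)
    · rw [hG g hg g' hg' d a1 d' b1 h.2]
  have D01 : ∀ α ∈ I, ∀ β ∈ I, ∀ t, t ∈ Darr (Fam e α) 0 1 → t ∈ Darr (Fam e β) 0 1 → α = β := by
    have ch : ∀ α ∈ I, ∀ t, t ∈ Darr (Fam e α) 0 1 →
      (∃ g ∈ insert 0 R, α = .inl (.inl g) ∧ ∃ j : ℕ, j < k ∧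
        t = e ((j : ZMod k), ((j : ZMod N) + 1) * g)) ∨
      (∃ g ∈ R, α = .inl (.inr g) ∧ ∃ j : ℕ, j < k ∧
        t = e ((j : ZMod k), ((j : ZMod N) + 1) * -g)) := by
      rintro ((g | g) | (g | g)) h t ht
      · exact Or.inl ⟨g, by simpa [I] using h, rfl, W0_cross e g t ht⟩
      · exact Or.inr ⟨g, by simpa [I] using h, rfl, W1_cross e g t ht⟩
      · exact absurd (W2_other e 0 g t 0 1 ht).2 (by decide)
      · exact absurd (W2_other e 1 g t 0 1 ht).1 (by decide)
    have bad : ∀ g ∈ insert 0 R, ∀ g' ∈ R, g ≠ -g' := by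
      intro g hg g' hg' h
      rcases Finset.mem_insert.1 hg with rfl | hg
      · rw [eq_comm, neg_eq_zero] at h
        exact hR0 (h ▸ hg')
      · exact hR1 g hg g' hg' h
    have cancel : ∀ (j j' : ℕ) (x y : ZMod N), j < k → j' < k →
        e ((j : ZMod k), ((j : ZMod N) + 1) * x) = e ((j' : ZMod k), ((j' : ZMod N) + 1) * y) → x = y := by
      intro j j' x y hj hj' h
      simp only [EmbeddingLike.apply_eq_iff_eq, Prod.mk.injEq] at h
      have := cast_inj_lt hj hj' h.1
      subst this
      exact (hsucc j hj).mul_left_cancel h.2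
    intro α hα β hβ t h1 h2
    rcases ch α hα t h1 with ⟨g, hg, rfl, j, hj, rfl⟩ | ⟨g, hg, rfl, j, hj, rfl⟩ <;>
    rcases ch β hβ _ h2 with ⟨g', hg', rfl, j', hj', h⟩ | ⟨g', hg', rfl, j', hj', h⟩ <;>
    have h := cancel _ _ _ _ hj hj' h
    · rw [h]
    · exact absurd h (bad g hg g' hg')
    · exact absurd h.symm (bad g' hg' g hg)
    · rw [neg_injective h]
  have Dall : ∀ α ∈ I, ∀ β ∈ I, ∀ i j t, t ∈ Darr (Fam e α) i j → t ∈ Darr (Fam e β) i j → α = β := by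
    have sw : ∀ (S : Finset (Fin 2 × ZMod L)) t, t ∈ Darr S 1 0 → -t ∈ Darr S 0 1 := by
      intro S t h
      obtain ⟨_, a, b, ha, hb, rfl⟩ := (mem_Darr _ _ _ _).1 h
      exact (mem_Darr _ _ _ _).2 ⟨fun h => absurd h (by decide), b, a, hb, ha, by abel⟩
    intro α hα β hβ i j t h1 h2
    fin_cases i <;> fin_cases j
    · exact D00 α hα β hβ t h1 h2
    · exact D01 α hα β hβ t h1 h2
    · exact D01 α hα β hβ (-t) (sw _ _ h1) (sw _ _ h2)
    · exact D11 α hα β hβ t h1 h2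
  have hinj : Set.InjOn (Fam e) I := by
    intro α hα β hβ h
    have hc : 1 < (Fam e α).card := by rw [hcard α hα]; omega
    obtain ⟨⟨i, a⟩, ha, ⟨j, b⟩, hb, hne⟩ := Finset.one_lt_card.1 hc
    have : a - b ∈ Darr (Fam e α) i j := by
      refine (mem_Darr _ _ _ _).2 ⟨?_, a, b, ha, hb, rfl⟩
      rintro rfl h0
      exact hne (by rw [sub_eq_zero.1 h0])
    exact Dall α hα β hβ i j _ this (h ▸ this)
  refine ⟨I.image (Fam e), ⟨?_, ?_⟩, ?_⟩
  · intro S hS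
    obtain ⟨α, hα, rfl⟩ := Finset.mem_image.1 hS
    exact hcard α hα
  · intro S hS S' hS' hne i j
    obtain ⟨α, hα, rfl⟩ := Finset.mem_image.1 hS
    obtain ⟨β, hβ, rfl⟩ := Finset.mem_image.1 hS'
    rw [Finset.disjoint_left]
    intro t h1 h2
    exact hne (by rw [Dall α hα β hβ i j t h1 h2])
  · rw [Finset.card_image_of_injOn hinj]
    simp only [I, Finset.card_disjSum, Finset.card_insert_of_notMem hR0]
    omega

theorem stmt_9 (w n : ℕ) (hw : 2 ≤ w) (p : Fin n → ℕ) (hp : ∀ i, (p i).Prime)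
    (hmono : StrictMono p) (hdvd : ∀ i, 2 * w - 2 ∣ p i - 1)
    (hCAC : ∀ i, ∃ C : Finset (Finset (ZMod (p i))),
      IsCAC (p i) w C ∧ (∀ S ∈ C, IsEquiDiff w S) ∧ C.card = (p i - 1) / (2 * w - 2))
    (hQ1 : ∀ i, @legendreSym (p i) ⟨hp i⟩ (-1) = -1)
    (hQ2 : ∀ i, ∀ j : ℕ, 1 ≤ j → j ≤ w - 2 →
      @legendreSym (p i) ⟨hp i⟩ (j : ℤ) * @legendreSym (p i) ⟨hp i⟩ ((j : ℤ) - w + 1) = -1)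
    (r : Fin n → ℕ) (hr : ∀ i, 0 < r i) :
    IsGreatest {k : ℕ | ∃ C : Finset (Finset (Fin 2 × ZMod ((w - 1) * ∏ i, p i ^ r i))),
        IsMCCAC 2 ((w - 1) * ∏ i, p i ^ r i) w C ∧ C.card = k}
      ((∏ i, p i ^ r i) + ((∏ i, p i ^ r i) - 1) / (w - 1)) := by
  obtain ⟨k, rfl⟩ : ∃ k, w = k + 1 := ⟨w - 1, by omega⟩
  have hk : 0 < k := by omega
  have e2 : 2 * (k + 1) - 2 = 2 * k := by omega
  simp only [e2] at hdvd hCAC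
  simp only [Nat.add_sub_cancel]
  set N := ∏ i, p i ^ r i with hNdef
  have hN0 : 0 < N := Finset.prod_pos fun i _ => pow_pos (hp i).pos _
  have : NeZero N := ⟨hN0.ne'⟩
  have hfac : ∀ q : ℕ, q.Prime → q ∣ N → ∃ i, q = p i := by
    intro q hq hqN
    obtain ⟨i, _, hi⟩ := (Prime.dvd_finset_prod_iff hq.prime _).1 hqN
    exact ⟨i, (Nat.prime_dvd_prime_iff_eq hq (hp i)).1 (hq.dvd_of_dvd_pow hi)⟩
  have hbig : ∀ q : ℕ, q.Prime → q ∣ N → 2 * k + 1 ≤ q := by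
    intro q hq hqN
    obtain ⟨i, rfl⟩ := hfac q hq hqN
    have h2 := hq.two_le
    have := Nat.le_of_dvd (by omega) (hdvd i)
    omega
  have hmod : N ≡ 1 [MOD 2 * k] := by
    have : ∏ i, p i ^ r i ≡ ∏ _i : Fin n, 1 [MOD 2 * k] := by
      refine Nat.ModEq.prod (fun i _ => ?_)
      have h1 : p i ≡ 1 [MOD 2 * k] := ((Nat.modEq_iff_dvd' (hp i).one_lt.le).2 (hdvd i)).symm
      simpa using h1.pow (r i)
    simpa using this
  have hd2 : 2 * k ∣ N - 1 := (Nat.modEq_iff_dvd' hN0).1 hmod.symm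
  have hd : k ∣ N - 1 := (Dvd.intro_left 2 rfl).trans hd2
  have hup : ∀ C : Finset (Finset (Fin 2 × ZMod (k * N))), IsMCCAC 2 (k * N) (k + 1) C →
      C.card ≤ N + (N - 1) / k := fun C hC => upper hk hN0 hbig hd C hC
  constructor
  · obtain ⟨R, r0, r1, r2, r3⟩ := exists_R (k := k) (N := N) hbig (by
      intro q hq hqN
      obtain ⟨i, rfl⟩ := hfac q hq hqN
      refine ⟨hQ1 i, fun j h1 h2 => ?_⟩
      have := hQ2 i j h1 (by omega)
      have e : (j : ℤ) - ((k + 1 : ℕ) : ℤ) + 1 = j - k := by push_cast; ring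
      rwa [e] at this)
    obtain ⟨Γ, g0, g1, g2⟩ := exists_Gamma (k := k) (N := N) hk (by
      intro q hq hqN
      obtain ⟨i, rfl⟩ := hfac q hq hqN
      exact ⟨hdvd i, hCAC i⟩) hbig
    have hcop : Nat.Coprime k N := by
      have := Cs_cop (k := k) (N := N) (c := k) hN0 hbig (by omega) (by omega) (by omega)
      exact Nat.isCoprime_iff_coprime.1 this
    obtain ⟨C, hC, hCc⟩ := construct hk ((ZMod.chineseRemainder hcop).symm.toAddEquiv) R Γ
      (fun c h1 h2 h3 => cop_unit (Cs_cop (k := k) hN0 hbig h1 (by omega) (by omega))) r0 r1 r2 g0 g1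
    refine ⟨C, hC, le_antisymm (hup C hC) ?_⟩
    rw [hCc]
    obtain ⟨m, hm⟩ := hd2
    have a1 : (N - 1) / k = 2 * m := by
      rw [hm]
      have : 2 * k * m = k * (2 * m) := by ring
      rw [this, Nat.mul_div_cancel_left _ hk]
    have a2 : m ≤ Γ.card := by
      rw [hm] at g2
      exact Nat.le_of_mul_le_mul_left g2 (by omega)
    omega
  · rintro _ ⟨C, hC, rfl⟩
    exact hup C hC
end
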